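/- Polarization set sizes: for a discrete memoryless source polarization with β ∈ (0,1/2) and δ_N = 2^{−N^β}, lim_{N→∞} |ℋ_X|/N = H(X), lim_{N→∞} |ℒ_X|/N = 1 − H(X), lim_{N→∞} |ℋ_{X|Y}|/N = H(X|Y), and lim_{N→∞} |ℒ_{X|Y}|/N = 1 − H(X|Y). -/

import Mathlib

open Finset Filter

namespace PolarSrc

/-- The polar kernel `F = [[1,0],[1,1]]` over `GF(2)`. -/
def Fker : Matrix (Fin 2) (Fin 2) (ZMod 2) := !![1, 0; 1, 1]

/-- Kronecker power `F^{⊗n}`. -/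
noncomputable def Fpow : (n : ℕ) → Matrix (Fin (2 ^ n)) (Fin (2 ^ n)) (ZMod 2)
  | 0 => 1
  | n + 1 =>
    Matrix.reindex
      (finProdFinEquiv.trans (finCongr (by rw [pow_succ, Nat.mul_comm])))
      (finProdFinEquiv.trans (finCongr (by rw [pow_succ, Nat.mul_comm])))
      (Matrix.kroneckerMap (· * ·) Fker (Fpow n))

/-- The bit-reversal permutation on `Fin (2^n)`. -/
def br : (n : ℕ) → Fin (2 ^ n) ≃ Fin (2 ^ n)
  | 0 => Equiv.refl _
  | n + 1 =>
    ((finCongr (by rw [pow_succ, Nat.mul_comm] : 2 ^ (n + 1) = 2 * 2 ^ n)).trans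
      ((finProdFinEquiv (m := 2) (n := 2 ^ n)).symm)).trans <|
    (((Equiv.refl (Fin 2)).prodCongr (br n)).trans (Equiv.prodComm _ _)).trans <|
    (finProdFinEquiv (m := 2 ^ n) (n := 2)).trans (finCongr (by rw [pow_succ]))

/-- Polar transform `U^N = X^N G_N` with `G_N = R F^{⊗n}` (`R` the bit reversal). -/
noncomputable def polarU (n : ℕ) (x : Fin (2 ^ n) → ZMod 2) (j : Fin (2 ^ n)) : ZMod 2 :=
  ∑ k, x k * Fpow n (br n k) j

/-- Probability (under the i.i.d. source with marginal `pm`) that `U_j = u` and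
the prefix `U_1^{j-1}` equals `pre`. -/
noncomputable def prU (n : ℕ) (pm : ZMod 2 → ℝ) (j : Fin (2 ^ n)) (u : ZMod 2)
    (pre : {i : Fin (2 ^ n) // i < j} → ZMod 2) : ℝ :=
  ∑ x ∈ Finset.univ.filter
      (fun x : Fin (2 ^ n) → ZMod 2 =>
        polarU n x j = u ∧ ∀ i : {i : Fin (2 ^ n) // i < j}, polarU n x i = pre i),
    ∏ i, pm (x i)

/-- Bhattacharyya parameter `Z(U_j | U_1^{j-1})`. -/
noncomputable def Zsrc (n : ℕ) (pm : ZMod 2 → ℝ) (j : Fin (2 ^ n)) : ℝ :=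
  2 * ∑ pre : {i : Fin (2 ^ n) // i < j} → ZMod 2,
    Real.sqrt (prU n pm j 0 pre * prU n pm j 1 pre)

/-- Probability that `U_j = u`, `U_1^{j-1} = pre` and `Y^N = y`, under the i.i.d.
joint source `p` on `X × Y`. -/
noncomputable def prUY {Y : Type*} [Fintype Y] (n : ℕ) (p : ZMod 2 × Y → ℝ)
    (j : Fin (2 ^ n)) (u : ZMod 2)
    (pre : {i : Fin (2 ^ n) // i < j} → ZMod 2) (y : Fin (2 ^ n) → Y) : ℝ :=
  ∑ x ∈ Finset.univ.filter
      (fun x : Fin (2 ^ n) → ZMod 2 =>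
        polarU n x j = u ∧ ∀ i : {i : Fin (2 ^ n) // i < j}, polarU n x i = pre i),
    ∏ i, p (x i, y i)

/-- Bhattacharyya parameter `Z(U_j | U_1^{j-1}, Y^N)`. -/
noncomputable def Zcond {Y : Type*} [Fintype Y] (n : ℕ) (p : ZMod 2 × Y → ℝ)
    (j : Fin (2 ^ n)) : ℝ :=
  2 * ∑ pre : {i : Fin (2 ^ n) // i < j} → ZMod 2, ∑ y : Fin (2 ^ n) → Y,
    Real.sqrt (prUY n p j 0 pre y * prUY n p j 1 pre y)

/-- `δ_N = 2^{-N^β}` with `N = 2^n`. -/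
noncomputable def deltaN (n : ℕ) (β : ℝ) : ℝ := (2 : ℝ) ^ (-(((2 : ℝ) ^ n) ^ β))

open Classical in
/-- High-entropy source set `ℋ_X`. -/
noncomputable def HXset (n : ℕ) (pm : ZMod 2 → ℝ) (β : ℝ) : Finset (Fin (2 ^ n)) :=
  Finset.univ.filter (fun j => 1 - deltaN n β ≤ Zsrc n pm j)

open Classical in
/-- Low-entropy source set `ℒ_X`. -/
noncomputable def LXset (n : ℕ) (pm : ZMod 2 → ℝ) (β : ℝ) : Finset (Fin (2 ^ n)) :=
  Finset.univ.filter (fun j => Zsrc n pm j ≤ deltaN n β)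

open Classical in
/-- High-entropy set `ℋ_{X|Y}`. -/
noncomputable def HXYset {Y : Type*} [Fintype Y] (n : ℕ) (p : ZMod 2 × Y → ℝ)
    (β : ℝ) : Finset (Fin (2 ^ n)) :=
  Finset.univ.filter (fun j => 1 - deltaN n β ≤ Zcond n p j)

open Classical in
/-- Low-entropy set `ℒ_{X|Y}`. -/
noncomputable def LXYset {Y : Type*} [Fintype Y] (n : ℕ) (p : ZMod 2 × Y → ℝ)
    (β : ℝ) : Finset (Fin (2 ^ n)) :=
  Finset.univ.filter (fun j => Zcond n p j ≤ deltaN n β)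

/-- Marginal law of `X`. -/
noncomputable def pmX {Y : Type*} [Fintype Y] (p : ZMod 2 × Y → ℝ) (x : ZMod 2) : ℝ :=
  ∑ y, p (x, y)

/-- Entropy `H(X)` in bits. -/
noncomputable def entX {Y : Type*} [Fintype Y] (p : ZMod 2 × Y → ℝ) : ℝ :=
  -∑ x, pmX p x * Real.logb 2 (pmX p x)

/-- Conditional entropy `H(X|Y)` in bits. -/
noncomputable def entXY {Y : Type*} [Fintype Y] (p : ZMod 2 × Y → ℝ) : ℝ :=
  -∑ x, ∑ y, p (x, y) * Real.logb 2 (p (x, y) / (∑ x', p (x', y)))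

/-!
Let `j` be the index reached along a branch of the binary tree of polarization steps, and let `Z`
and `T` be the Bhattacharyya parameter and the total variation distance of `U_j` given its
observation. One step squares one of the two and at most doubles the other, and
`Z² + T² ≤ 1 ≤ Z + T`. Hence the average of `√(Z T)` over the branches contracts by a constant
factor at each step, so that all but an exponentially small proportion of the branches have `Z` or
`T` small after a linear number of steps. Once one of them is small it is squared about half of the
time, by Chebyshev's inequality, and becomes smaller than `2 ^ (-N ^ β)` for every `β < 1 / 2`.

The conditional entropy is conserved on average, is close to `0` when `Z` is small and to `1` bit
when `T` is small, which determines the proportion of branches of each kind. The unconditional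
statements are those for a constant side information.
-/

/-- Average of `f` over the binary words of length `n`, for estimates on a random branch of a
binary tree. The head of a word is its most recent letter, so extending a branch is `::`. -/
noncomputable def wordAvg : ℕ → (List (Fin 2) → ℝ) → ℝ
  | 0, f => f []
  | n + 1, f => wordAvg n fun l => (f (0 :: l) + f (1 :: l)) / 2

/-- Proportion of the binary words of length `n` that lie in `A`. -/
noncomputable def wordFreq (n : ℕ) (A : Set (List (Fin 2))) : ℝ := wordAvg n (A.indicator 1)

section WordAverages

variable {n : ℕ} {f g : List (Fin 2) → ℝ} {A B : Set (List (Fin 2))}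

lemma wordAvg_mono (h : ∀ l, l.length = n → f l ≤ g l) : wordAvg n f ≤ wordAvg n g := by
  induction n generalizing f g with
  | zero => exact h [] rfl
  | succ n ih =>
    refine ih fun l hl => ?_
    linarith [h (0 :: l) (by simp [hl]), h (1 :: l) (by simp [hl])]

lemma wordAvg_add (n : ℕ) (f g : List (Fin 2) → ℝ) :
    wordAvg n (fun l => f l + g l) = wordAvg n f + wordAvg n g := by
  induction n generalizing f g with
  | zero => rfl
  | succ n ih =>
    simp only [wordAvg, ← ih]
    congr 1 with l
    ring

lemma wordAvg_const_mul (n : ℕ) (c : ℝ) (f : List (Fin 2) → ℝ) :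
    wordAvg n (fun l => c * f l) = c * wordAvg n f := by
  induction n generalizing f with
  | zero => rfl
  | succ n ih =>
    simp only [wordAvg, ← ih]
    congr 1 with l
    ring

@[simp]
lemma wordAvg_const (n : ℕ) (c : ℝ) : wordAvg n (fun _ => c) = c := by
  induction n with
  | zero => rfl
  | succ n ih => simp [wordAvg, ih]

lemma wordAvg_append (m k : ℕ) (f : List (Fin 2) → ℝ) :
    wordAvg (m + k) f = wordAvg m fun u => wordAvg k fun w => f (w ++ u) := by
  induction k generalizing f with
  | zero => rfl
  | succ _ ih => exact ih _

lemma wordFreq_mono (h : A ⊆ B) : wordFreq n A ≤ wordFreq n B :=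
  wordAvg_mono fun l _ => Set.indicator_le_indicator_of_subset h (fun _ => zero_le_one) l

lemma wordFreq_nonneg (n : ℕ) (A : Set (List (Fin 2))) : 0 ≤ wordFreq n A :=
  (wordAvg_const n 0).ge.trans
    (wordAvg_mono fun l _ => Set.indicator_nonneg (fun _ _ => zero_le_one) l)

lemma wordFreq_univ (n : ℕ) : wordFreq n Set.univ = 1 := by
  simp [wordFreq, Pi.one_def]

lemma wordFreq_append_le {m k : ℕ} {C : Set (List (Fin 2))}
    (h : ∀ w u, w.length = k → w ++ u ∈ A → u ∈ B ∨ w ∈ C) :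
    wordFreq (m + k) A ≤ wordFreq m B + wordFreq k C := by
  have pointwise (u w : List (Fin 2)) (hw : w.length = k) :
      A.indicator (1 : List (Fin 2) → ℝ) (w ++ u) ≤ B.indicator 1 u + C.indicator 1 w := by
    classical
    have := h w u hw
    simp only [Set.indicator_apply, Pi.one_apply]
    split_ifs <;> simp_all
  calc wordFreq (m + k) A
      = wordAvg m fun u => wordAvg k fun w => A.indicator 1 (w ++ u) := wordAvg_append m k _
    _ ≤ wordAvg m fun u => wordAvg k fun w => B.indicator 1 u + C.indicator 1 w :=
        wordAvg_mono fun u _ => wordAvg_mono fun w => pointwise u w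
    _ = wordFreq m B + wordFreq k C := by
        simp only [wordAvg_add, wordAvg_const, wordFreq]

lemma wordFreq_union_le (n : ℕ) (A B : Set (List (Fin 2))) :
    wordFreq n (A ∪ B) ≤ wordFreq n A + wordFreq n B := by
  simp only [wordFreq, ← wordAvg_add]
  refine wordAvg_mono fun l _ => ?_
  classical
  simp only [Set.indicator_apply, Pi.one_apply, Set.mem_union]
  split_ifs <;> simp_all

lemma mul_wordFreq_le_wordAvg {c : ℝ} (hf : ∀ l, l.length = n → 0 ≤ f l)
    (hA : ∀ l ∈ A, l.length = n → c ≤ f l) : c * wordFreq n A ≤ wordAvg n f := by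
  rw [wordFreq, ← wordAvg_const_mul]
  refine wordAvg_mono fun l hl => ?_
  by_cases h : l ∈ A
  · simpa [h] using hA l h hl
  · simpa [h] using hf l hl

lemma wordAvg_sq_count (c : Fin 2) (n : ℕ) :
    wordAvg n (fun w => (2 * (w.count c : ℝ) - n) ^ 2) = n := by
  induction n with
  | zero => simp [wordAvg]
  | succ n ih =>
    have average_step (w : List (Fin 2)) :
        ((2 * ((0 :: w).count c : ℝ) - (n + 1 : ℕ)) ^ 2 +
            (2 * ((1 :: w).count c : ℝ) - (n + 1 : ℕ)) ^ 2) / 2 =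
          (2 * (w.count c : ℝ) - n) ^ 2 + 1 := by
      fin_cases c <;> simp <;> ring
    simp only [wordAvg, average_step]
    rw [wordAvg_add, wordAvg_const, ih]
    push_cast
    rfl

lemma wordFreq_count_lt_le (c : Fin 2) (hn : 0 < n) {α : ℝ} (hα : α < 1 / 2) :
    wordFreq n {w | (w.count c : ℝ) < α * n} ≤ 1 / ((1 - 2 * α) ^ 2 * n) := by
  have hn' : (0 : ℝ) < n := mod_cast hn
  have hα' : 0 < 1 - 2 * α := by linarith
  have chebyshev : ((1 - 2 * α) * n) ^ 2 * wordFreq n {w | (w.count c : ℝ) < α * n} ≤ n := by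
    refine (mul_wordFreq_le_wordAvg (fun _ _ => sq_nonneg _) fun w hw _ => ?_).trans_eq
      (wordAvg_sq_count c n)
    have hw : (w.count c : ℝ) < α * n := hw
    nlinarith [mul_pos hα' hn']
  rw [le_div_iff₀ (by positivity)]
  nlinarith

end WordAverages

/-- A nonnegative quantity on the binary tree that is squared (at least) by the letter `c` and at
most doubled by the other one: the Bhattacharyya parameter for `c = 1`, the total variation for
`c = 0`. -/
structure IsSquaring (c : Fin 2) (W : List (Fin 2) → ℝ) : Prop where
  nonneg : ∀ l, 0 ≤ W l
  le_sq : ∀ l, W (c :: l) ≤ W l ^ 2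
  le_two_mul : ∀ b ≠ c, ∀ l, W (b :: l) ≤ 2 * W l

lemma IsSquaring.append_le {c : Fin 2} {W : List (Fin 2) → ℝ} (hW : IsSquaring c W)
    {u : List (Fin 2)} {L : ℝ} (hu : W u ≤ 2 ^ (-L)) (w : List (Fin 2)) :
    W (w ++ u) ≤ 2 ^ (-((L - w.length) * 2 ^ w.count c)) := by
  induction w with
  | nil => simpa using hu
  | cons b w ih =>
    set E := (L - w.length) * 2 ^ w.count c with hE
    have one_le : (1 : ℝ) ≤ 2 ^ w.count c := one_le_pow₀ one_le_two
    rcases eq_or_ne b c with rfl | hb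
    · calc W (b :: (w ++ u)) ≤ W (w ++ u) ^ 2 := hW.le_sq _
        _ ≤ ((2 : ℝ) ^ (-E)) ^ 2 := by gcongr; exact hW.nonneg _
        _ = 2 ^ (-(2 * E)) := by
          rw [← Real.rpow_natCast, ← Real.rpow_mul two_pos.le]
          congr 1
          push_cast
          ring
        _ ≤ 2 ^ (-((L - (b :: w).length) * 2 ^ (b :: w).count b)) := by
          refine Real.rpow_le_rpow_of_exponent_le one_le_two (neg_le_neg ?_)
          rw [List.length_cons, List.count_cons_self, pow_succ, hE]
          push_cast
          nlinarith
    · calc W (b :: (w ++ u)) ≤ 2 * W (w ++ u) := hW.le_two_mul b hb _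
        _ ≤ 2 * 2 ^ (-E) := by gcongr
        _ = 2 ^ (-(E - 1)) := by
          rw [neg_sub, sub_eq_add_neg, Real.rpow_add two_pos, Real.rpow_one]
        _ ≤ 2 ^ (-((L - (b :: w).length) * 2 ^ (b :: w).count c)) := by
          refine Real.rpow_le_rpow_of_exponent_le one_le_two (neg_le_neg ?_)
          rw [List.length_cons, List.count_cons_of_ne hb, hE]
          push_cast
          nlinarith

/-- The relations between the Bhattacharyya parameter `Z` and the total variation `T` along the
binary tree of polar transforms, `0` being the minus and `1` the plus transform. -/
structure IsPolarPair (Z T : List (Fin 2) → ℝ) : Prop where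
  nonneg_left : ∀ l, 0 ≤ Z l
  nonneg_right : ∀ l, 0 ≤ T l
  sq_add_sq_le : ∀ l, Z l ^ 2 + T l ^ 2 ≤ 1
  one_le_add : ∀ l, 1 ≤ Z l + T l
  left_zero_le : ∀ l, Z (0 :: l) ≤ 2 * Z l - Z l ^ 2
  left_one : ∀ l, Z (1 :: l) = Z l ^ 2
  right_zero : ∀ l, T (0 :: l) = T l ^ 2
  right_one_le : ∀ l, T (1 :: l) ≤ 2 * T l - T l ^ 2

/-- The words that are not yet polarized at threshold `δ`. -/
def undecided (Z T : List (Fin 2) → ℝ) (δ : ℝ) : Set (List (Fin 2)) := {l | δ < Z l ∧ δ < T l}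

lemma undecided_anti {Z T : List (Fin 2) → ℝ} : Antitone (undecided Z T) :=
  fun _ _ h _ hl => ⟨h.trans_lt hl.1, h.trans_lt hl.2⟩

lemma sqrt_mul_add_sqrt_mul_le {z t : ℝ} (hz : 0 ≤ z) (ht : 0 ≤ t) (h : z ^ 2 + t ^ 2 ≤ 1) :
    √(z * (2 - t)) + √((2 - z) * t) ≤ 31 / 16 := by
  have hz1 : z ≤ 1 := by nlinarith
  have ht1 : t ≤ 1 := by nlinarith
  have sum_le : z + t ≤ 3 / 2 := by nlinarith [sq_nonneg (z - t)]
  have prod_le : z * t ≤ 1 / 2 := by nlinarith [sq_nonneg (z - t)]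
  have ha : 0 ≤ z * (2 - t) := mul_nonneg hz (by linarith)
  have hb : 0 ≤ (2 - z) * t := mul_nonneg (by linarith) ht
  -- With `q = z t` and `x = 2 - z - t ≥ 1/2`, the product is `(q + x) ^ 2 - x ^ 2`, so its root
  -- stays away from `q + x`.
  have cross : √(z * (2 - t)) * √((2 - z) * t) ≤ z * t + (2 - z - t) - 1 / 8 := by
    rw [← Real.sqrt_mul ha]
    refine Real.sqrt_le_iff.2 ⟨by nlinarith, ?_⟩
    nlinarith [mul_nonneg hz ht]
  refine abs_le_of_sq_le_sq' ?_ (by norm_num) |>.2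
  nlinarith [Real.sq_sqrt ha, Real.sq_sqrt hb]

namespace IsPolarPair

variable {Z T : List (Fin 2) → ℝ}

lemma isSquaring_left (h : IsPolarPair Z T) : IsSquaring 1 Z where
  nonneg := h.nonneg_left
  le_sq l := (h.left_one l).le
  le_two_mul b hb l := by
    obtain rfl : b = 0 := by omega
    linarith [h.left_zero_le l, sq_nonneg (Z l)]

lemma isSquaring_right (h : IsPolarPair Z T) : IsSquaring 0 T where
  nonneg := h.nonneg_right
  le_sq l := (h.right_zero l).le
  le_two_mul b hb l := by
    obtain rfl : b = 1 := by omega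
    linarith [h.right_one_le l, sq_nonneg (T l)]

lemma left_le_one (h : IsPolarPair Z T) (l : List (Fin 2)) : Z l ≤ 1 := by
  nlinarith [h.sq_add_sq_le l, sq_nonneg (T l)]

lemma right_le_sqrt (h : IsPolarPair Z T) {l : List (Fin 2)} {ε : ℝ} (hl : 1 - ε ≤ Z l) :
    T l ≤ √(2 * ε) := by
  refine Real.le_sqrt_of_sq_le ?_
  nlinarith [h.sq_add_sq_le l, h.nonneg_left l, h.left_le_one l]

lemma one_sub_le_left (h : IsPolarPair Z T) {l : List (Fin 2)} {ε : ℝ} (hl : T l ≤ ε) :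
    1 - ε ≤ Z l := by
  linarith [h.one_le_add l]

lemma sqrt_mul_average_le (h : IsPolarPair Z T) (l : List (Fin 2)) :
    (√(Z (0 :: l) * T (0 :: l)) + √(Z (1 :: l) * T (1 :: l))) / 2 ≤
      31 / 32 * √(Z l * T l) := by
  have hz := h.nonneg_left l
  have ht := h.nonneg_right l
  have minus_le : √(Z (0 :: l) * T (0 :: l)) ≤ √(Z l * T l) * √((2 - Z l) * T l) := by
    rw [← Real.sqrt_mul (by positivity), h.right_zero]
    refine Real.sqrt_le_sqrt ?_
    nlinarith [mul_le_mul_of_nonneg_right (h.left_zero_le l) (sq_nonneg (T l))]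
  have plus_le : √(Z (1 :: l) * T (1 :: l)) ≤ √(Z l * T l) * √(Z l * (2 - T l)) := by
    rw [← Real.sqrt_mul (by positivity), h.left_one]
    refine Real.sqrt_le_sqrt ?_
    nlinarith [mul_le_mul_of_nonneg_left (h.right_one_le l) (sq_nonneg (Z l))]
  nlinarith [sqrt_mul_add_sqrt_mul_le hz ht (h.sq_add_sq_le l), Real.sqrt_nonneg (Z l * T l)]

lemma wordAvg_sqrt_mul_le (h : IsPolarPair Z T) (n : ℕ) :
    wordAvg n (fun l => √(Z l * T l)) ≤ (31 / 32) ^ n := by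
  induction n with
  | zero =>
    rw [pow_zero]
    refine Real.sqrt_le_one.2 ?_
    nlinarith [h.sq_add_sq_le [], sq_nonneg (Z [] - T [])]
  | succ n ih =>
    calc wordAvg (n + 1) (fun l => √(Z l * T l))
        ≤ wordAvg n (fun l => 31 / 32 * √(Z l * T l)) :=
          wordAvg_mono fun l _ => h.sqrt_mul_average_le l
      _ = 31 / 32 * wordAvg n (fun l => √(Z l * T l)) := wordAvg_const_mul _ _ _
      _ ≤ (31 / 32) ^ (n + 1) := by rw [pow_succ']; gcongr

lemma wordFreq_undecided_le (h : IsPolarPair Z T) (n : ℕ) {δ : ℝ} (hδ : 0 < δ) :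
    wordFreq n (undecided Z T δ) ≤ δ⁻¹ * (31 / 32) ^ n := by
  rw [inv_mul_eq_div, le_div_iff₀' hδ]
  refine (mul_wordFreq_le_wordAvg (fun _ _ => Real.sqrt_nonneg _) fun l hl _ => ?_).trans
    (h.wordAvg_sqrt_mul_le n)
  refine Real.le_sqrt_of_sq_le ?_
  nlinarith [hl.1, hl.2]

lemma wordFreq_undecided_add_le (h : IsPolarPair Z T) (m : ℕ) {k : ℕ} (hk : 0 < k)
    {α L : ℝ} (hα : α < 1 / 2) (hL : k ≤ L) :
    wordFreq (m + k) (undecided Z T (2 ^ (-((L - k) * 2 ^ (α * k))))) ≤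
      wordFreq m (undecided Z T (2 ^ (-L))) + 2 / ((1 - 2 * α) ^ 2 * k) := by
  have count_lt {c : Fin 2} {W : List (Fin 2) → ℝ} (hW : IsSquaring c W) {w u : List (Fin 2)}
      (hw : w.length = k) (hu : W u ≤ 2 ^ (-L))
      (hwu : 2 ^ (-((L - k) * 2 ^ (α * k))) < W (w ++ u)) : (w.count c : ℝ) < α * k := by
    by_contra! hcount
    refine (hwu.trans_le (hW.append_le hu w)).not_ge ?_
    rw [hw, ← Real.rpow_natCast]
    have := sub_nonneg.2 hL
    gcongr <;> exact one_le_two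
  have split (w u : List (Fin 2)) (hw : w.length = k)
      (hwu : w ++ u ∈ undecided Z T (2 ^ (-((L - k) * 2 ^ (α * k))))) :
      u ∈ undecided Z T (2 ^ (-L)) ∨
        w ∈ {w | (w.count (1 : Fin 2) : ℝ) < α * k} ∪ {w | (w.count (0 : Fin 2) : ℝ) < α * k} := by
    by_cases hZ : 2 ^ (-L) < Z u
    · by_cases hT : 2 ^ (-L) < T u
      · exact .inl ⟨hZ, hT⟩
      · exact .inr (.inr (count_lt h.isSquaring_right hw (not_lt.1 hT) hwu.2))
    · exact .inr (.inl (count_lt h.isSquaring_left hw (not_lt.1 hZ) hwu.1))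
  refine (wordFreq_append_le split).trans ?_
  gcongr
  calc _ ≤ _ := wordFreq_union_le _ _ _
    _ ≤ 1 / ((1 - 2 * α) ^ 2 * k) + 1 / ((1 - 2 * α) ^ 2 * k) :=
        add_le_add (wordFreq_count_lt_le 1 hk hα) (wordFreq_count_lt_le 0 hk hα)
    _ = 2 / ((1 - 2 * α) ^ 2 * k) := by rw [← add_div, one_add_one_eq_two]

end IsPolarPair

lemma eventually_succ_le_div_mul_rpow {M : ℕ} (hM : 0 < M) :
    ∀ᶠ n : ℕ in atTop, (n : ℝ) + 1 ≤ (n / M : ℕ) * 2 ^ (((n / M : ℕ) : ℝ) / 4) := by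
  have hk : Tendsto (fun n => n / M) atTop atTop := Nat.tendsto_div_const_atTop hM.ne'
  have hpow : Tendsto (fun n : ℕ => (2 : ℝ) ^ (((n / M : ℕ) : ℝ) / 4)) atTop atTop :=
    (tendsto_rpow_atTop_of_base_gt_one 2 one_lt_two).comp
      ((tendsto_natCast_atTop_atTop.comp hk).atTop_div_const (by norm_num))
  filter_upwards [hk.eventually_ge_atTop 1, hpow.eventually_ge_atTop (2 * M)] with n hn hpn
  have one_le : (1 : ℝ) ≤ (n / M : ℕ) := mod_cast hn
  calc (n : ℝ) + 1 ≤ M * ((n / M : ℕ) + 1) := mod_cast Nat.lt_mul_div_succ n hM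
    _ ≤ (n / M : ℕ) * (2 * M) := by nlinarith [Nat.cast_nonneg (α := ℝ) M]
    _ ≤ (n / M : ℕ) * 2 ^ (((n / M : ℕ) : ℝ) / 4) := by gcongr

lemma exists_block_lengths (D : ℕ) {α β : ℝ} (hβ : 0 < β) (hβα : β < α) :
    ∃ k l : ℕ → ℕ, Tendsto k atTop atTop ∧ Tendsto l atTop atTop ∧ ∀ᶠ n in atTop,
      D * k n + k n + l n = n ∧ (l n : ℝ) + 1 ≤ k n * 2 ^ ((k n : ℝ) / 4) ∧ β * n ≤ α * l n := by
  have hα : 0 < α := hβ.trans hβα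
  have hαβ : 0 < α - β := sub_pos.2 hβα
  obtain ⟨M, hM⟩ := exists_nat_ge ((D + 1) * α / (α - β))
  rw [div_le_iff₀ hαβ] at hM
  have hDM : D + 1 ≤ M := by
    suffices ((D + 1 : ℕ) : ℝ) ≤ M from mod_cast this
    push_cast
    nlinarith [Nat.cast_nonneg (α := ℝ) M]
  have hM0 : 0 < M := by omega
  have blocks_le (n : ℕ) : (D + 1) * (n / M) ≤ n :=
    (Nat.mul_le_mul_right _ hDM).trans (Nat.mul_div_le n M)
  have last_block (n : ℕ) : ((n - (D + 1) * (n / M) : ℕ) : ℝ) = n - (D + 1) * (n / M : ℕ) := by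
    rw [Nat.cast_sub (blocks_le n)]
    push_cast
    rfl
  have last_block_ge (n : ℕ) : β * n ≤ α * (n - (D + 1) * (n / M : ℕ) : ℝ) := by
    have : (M : ℝ) * (n / M : ℕ) ≤ n := mod_cast Nat.mul_div_le n M
    nlinarith [mul_le_mul_of_nonneg_right hM (Nat.cast_nonneg (α := ℝ) (n / M))]
  have hk : Tendsto (fun n => n / M) atTop atTop := Nat.tendsto_div_const_atTop hM0.ne'
  refine ⟨fun n => n / M, fun n => n - (D + 1) * (n / M), hk, ?_, ?_⟩
  · refine tendsto_natCast_atTop_iff.1 (tendsto_atTop_mono (fun n => ?_)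
      (tendsto_natCast_atTop_atTop.const_mul_atTop (div_pos hβ hα)))
    rw [last_block, div_mul_eq_mul_div, div_le_iff₀' hα]
    exact last_block_ge n
  · filter_upwards [eventually_succ_le_div_mul_rpow hM0] with n hn
    refine ⟨?_, ?_, ?_⟩
    · have := blocks_le n
      rw [← Nat.add_one_mul]
      omega
    · refine le_trans ?_ hn
      gcongr
      exact Nat.sub_le _ _
    · rw [last_block]
      exact last_block_ge n

lemma deltaN_pos (n : ℕ) (β : ℝ) : 0 < deltaN n β := by
  unfold deltaN
  positivity

lemma tendsto_deltaN {β : ℝ} (hβ : 0 < β) : Tendsto (fun n => deltaN n β) atTop (nhds 0) :=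
  (tendsto_rpow_atBot_of_base_gt_one 2 one_lt_two).comp <| tendsto_neg_atTop_atBot.comp <|
    (tendsto_rpow_atTop hβ).comp (tendsto_pow_atTop_atTop_of_one_lt one_lt_two)

namespace IsPolarPair

variable {Z T : List (Fin 2) → ℝ}

lemma wordFreq_undecided_blocks_le (h : IsPolarPair Z T) {D k l : ℕ} (hk : 0 < k) (hl : 0 < l)
    (hD : (31 / 32 : ℝ) ^ D ≤ 1 / 8) (hlk : (l : ℝ) + 1 ≤ k * 2 ^ ((k : ℝ) / 4))
    {α β : ℝ} (hα : α < 1 / 2) (hβ : β * (D * k + k + l : ℕ) ≤ α * l) :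
    wordFreq (D * k + k + l) (undecided Z T (deltaN (D * k + k + l) β)) ≤
      (1 / 2) ^ k + 8 / k + 2 / ((1 - 2 * α) ^ 2 * l) := by
  set L : ℝ := k * 2 ^ ((k : ℝ) / 4)
  have first : wordFreq (D * k) (undecided Z T (2 ^ (-(2 * k : ℝ)))) ≤ (1 / 2) ^ k := by
    calc _ ≤ ((2 : ℝ) ^ (-(2 * k : ℝ)))⁻¹ * (31 / 32) ^ (D * k) :=
          h.wordFreq_undecided_le _ (by positivity)
      _ = (4 * (31 / 32) ^ D) ^ k := by
        rw [Real.rpow_neg two_pos.le, inv_inv, Real.rpow_mul two_pos.le, Real.rpow_natCast, pow_mul,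
          ← mul_pow]
        norm_num
      _ ≤ (1 / 2) ^ k := by gcongr; linarith
  have second : wordFreq (D * k + k) (undecided Z T (2 ^ (-L))) ≤
      wordFreq (D * k) (undecided Z T (2 ^ (-(2 * k : ℝ)))) + 8 / k := by
    convert h.wordFreq_undecided_add_le (D * k) hk (α := 1 / 4) (L := 2 * k) (by norm_num) ?_
      using 2
    · rw [two_mul, add_sub_cancel_right, one_div_mul_eq_div]
    · field_simp
      norm_num
    · linarith [Nat.cast_nonneg (α := ℝ) k]
  have third : wordFreq (D * k + k + l) (undecided Z T (2 ^ (-((L - l) * 2 ^ (α * l))))) ≤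
      wordFreq (D * k + k) (undecided Z T (2 ^ (-L))) + 2 / ((1 - 2 * α) ^ 2 * l) :=
    h.wordFreq_undecided_add_le _ hl hα (by linarith)
  have threshold : (2 : ℝ) ^ (-((L - l) * 2 ^ (α * l))) ≤ deltaN (D * k + k + l) β := by
    refine Real.rpow_le_rpow_of_exponent_le one_le_two (neg_le_neg ?_)
    calc ((2 : ℝ) ^ (D * k + k + l)) ^ β = 2 ^ (β * (D * k + k + l : ℕ)) := by
          rw [← Real.rpow_natCast, ← Real.rpow_mul two_pos.le, mul_comm]
      _ ≤ 1 * 2 ^ (α * l) := by rw [one_mul]; gcongr; exact one_le_two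
      _ ≤ (L - l) * 2 ^ (α * l) := by gcongr; linarith
  linarith [wordFreq_mono (n := D * k + k + l) (undecided_anti (Z := Z) (T := T) threshold)]

theorem tendsto_wordFreq_undecided (h : IsPolarPair Z T) {β : ℝ} (hβ0 : 0 < β) (hβ : β < 1 / 2) :
    Tendsto (fun n => wordFreq n (undecided Z T (deltaN n β))) atTop (nhds 0) := by
  obtain ⟨α, hβα, hα⟩ := exists_between hβ
  obtain ⟨D, hD⟩ := exists_pow_lt_of_lt_one (by norm_num : (0 : ℝ) < 1 / 8)
    (by norm_num : (31 / 32 : ℝ) < 1)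
  obtain ⟨k, l, hk, hl, hkl⟩ := exists_block_lengths D hβ0 hβα
  have hα' : 0 < (1 - 2 * α) ^ 2 := pow_pos (by linarith) 2
  have bound_tendsto : Tendsto
      (fun n => (1 / 2 : ℝ) ^ k n + 8 / k n + 2 / ((1 - 2 * α) ^ 2 * l n)) atTop (nhds 0) := by
    have hk' := tendsto_natCast_atTop_atTop (R := ℝ).comp hk
    have hl' := tendsto_natCast_atTop_atTop (R := ℝ).comp hl
    simpa using (((tendsto_pow_atTop_nhds_zero_of_lt_one (by norm_num : (0 : ℝ) ≤ 1 / 2)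
      (by norm_num)).comp hk).add (hk'.const_div_atTop 8)).add
      ((hl'.const_mul_atTop hα').const_div_atTop 2)
  refine tendsto_of_tendsto_of_tendsto_of_le_of_le' tendsto_const_nhds bound_tendsto
    (.of_forall fun n => wordFreq_nonneg _ _) ?_
  filter_upwards [hkl, hk.eventually_gt_atTop 0, hl.eventually_gt_atTop 0]
    with n ⟨hn, hlk, hβn⟩ hk0 hl0
  have := h.wordFreq_undecided_blocks_le hk0 hl0 hD.le hlk hα (β := β) (by rwa [hn])
  rwa [hn] at this

end IsPolarPair

/-- The conservation law and the entropy bounds (in nats) that tie a function `H` on the binary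
tree, the conditional entropies of the polarized bits, to `Z` and `T`. -/
structure IsEntropyOf (H Z T : List (Fin 2) → ℝ) : Prop where
  add_eq : ∀ l, H (0 :: l) + H (1 :: l) = 2 * H l
  nonneg : ∀ l, 0 ≤ H l
  le_log_two : ∀ l, H l ≤ Real.log 2
  le_left : ∀ l, H l ≤ Z l
  log_two_sub_le : ∀ l, Real.log 2 - H l ≤ T l

lemma wordFreq_le_of_log_two_sub_le {V W : List (Fin 2) → ℝ} (hV : ∀ l, 0 ≤ V l)
    (hVW : ∀ l, Real.log 2 - V l ≤ W l) (n : ℕ) {ε : ℝ} (hε : 0 ≤ ε) :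
    wordFreq n {l | W l ≤ ε} ≤ (wordAvg n V + ε) / Real.log 2 := by
  rw [le_div_iff₀' (Real.log_pos one_lt_two)]
  calc Real.log 2 * wordFreq n {l | W l ≤ ε} ≤ wordAvg n (fun l => V l + ε) :=
        mul_wordFreq_le_wordAvg (fun l _ => add_nonneg (hV l) hε)
          fun l (hl : W l ≤ ε) _ => by linarith [hVW l]
    _ = wordAvg n V + ε := by rw [wordAvg_add, wordAvg_const]

lemma one_le_wordFreq_add (Z T : List (Fin 2) → ℝ) (n : ℕ) (ε : ℝ) :
    1 ≤ wordFreq n {l | T l ≤ ε} + wordFreq n {l | Z l ≤ ε} + wordFreq n (undecided Z T ε) := by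
  have cover : Set.univ ⊆ ({l | T l ≤ ε} ∪ {l | Z l ≤ ε}) ∪ undecided Z T ε := fun l _ => by
    simp only [undecided, Set.mem_union, Set.mem_ofPred_eq]
    grind
  calc 1 = wordFreq n Set.univ := (wordFreq_univ n).symm
    _ ≤ _ := wordFreq_mono cover
    _ ≤ _ := wordFreq_union_le _ _ _
    _ ≤ _ := by gcongr; exact wordFreq_union_le _ _ _

namespace IsEntropyOf

variable {H Z T : List (Fin 2) → ℝ} {δ : ℕ → ℝ}

lemma wordAvg_eq (h : IsEntropyOf H Z T) (n : ℕ) : wordAvg n H = H [] := by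
  induction n with
  | zero => rfl
  | succ n ih => simp only [wordAvg, h.add_eq, mul_div_cancel_left₀ _ (two_ne_zero' ℝ), ih]

lemma wordFreq_right_le (h : IsEntropyOf H Z T) (n : ℕ) {ε : ℝ} (hε : 0 ≤ ε) :
    wordFreq n {l | T l ≤ ε} ≤ (H [] + ε) / Real.log 2 :=
  h.wordAvg_eq n ▸ wordFreq_le_of_log_two_sub_le h.nonneg h.log_two_sub_le n hε

lemma wordFreq_left_le (h : IsEntropyOf H Z T) (n : ℕ) {ε : ℝ} (hε : 0 ≤ ε) :
    wordFreq n {l | Z l ≤ ε} ≤ (Real.log 2 - H [] + ε) / Real.log 2 := by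
  have avg : wordAvg n (fun l => Real.log 2 + -1 * H l) = Real.log 2 - H [] := by
    rw [wordAvg_add, wordAvg_const, wordAvg_const_mul, h.wordAvg_eq]
    ring
  rw [← avg]
  exact wordFreq_le_of_log_two_sub_le (fun l => by linarith [h.le_log_two l])
    (fun l => by linarith [h.le_left l]) n hε

theorem tendsto_wordFreq_one_sub_le_left (hH : IsEntropyOf H Z T) (h : IsPolarPair Z T)
    (hδ0 : ∀ n, 0 ≤ δ n) (hδ : Tendsto δ atTop (nhds 0))
    (hu : Tendsto (fun n => wordFreq n (undecided Z T (δ n))) atTop (nhds 0)) :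
    Tendsto (fun n => wordFreq n {l | 1 - δ n ≤ Z l}) atTop (nhds (H [] / Real.log 2)) := by
  have lower_tendsto : Tendsto (fun n => 1 - (Real.log 2 - H [] + δ n) / Real.log 2 -
      wordFreq n (undecided Z T (δ n))) atTop (nhds (H [] / Real.log 2)) := by
    convert (((hδ.const_add (Real.log 2 - H [])).div_const (Real.log 2)).const_sub 1).sub hu using 2
    have : Real.log 2 ≠ 0 := by positivity
    field_simp
    ring
  have upper_tendsto :
      Tendsto (fun n => (H [] + √(2 * δ n)) / Real.log 2) atTop (nhds (H [] / Real.log 2)) := by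
    simpa using ((hδ.const_mul 2).sqrt.const_add (H [])).div_const (Real.log 2)
  refine tendsto_of_tendsto_of_tendsto_of_le_of_le lower_tendsto upper_tendsto
    (fun n => ?_) fun n => ?_
  · have : wordFreq n {l | T l ≤ δ n} ≤ wordFreq n {l | 1 - δ n ≤ Z l} :=
      wordFreq_mono fun l hl => h.one_sub_le_left hl
    linarith [one_le_wordFreq_add Z T n (δ n), hH.wordFreq_left_le n (hδ0 n)]
  · exact (wordFreq_mono fun l hl => h.right_le_sqrt hl).trans
      (hH.wordFreq_right_le n (Real.sqrt_nonneg _))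

theorem tendsto_wordFreq_left_le (hH : IsEntropyOf H Z T)
    (hδ0 : ∀ n, 0 ≤ δ n) (hδ : Tendsto δ atTop (nhds 0))
    (hu : Tendsto (fun n => wordFreq n (undecided Z T (δ n))) atTop (nhds 0)) :
    Tendsto (fun n => wordFreq n {l | Z l ≤ δ n}) atTop (nhds (1 - H [] / Real.log 2)) := by
  have lower_tendsto : Tendsto (fun n => 1 - (H [] + δ n) / Real.log 2 -
      wordFreq n (undecided Z T (δ n))) atTop (nhds (1 - H [] / Real.log 2)) := by
    simpa using (((hδ.const_add (H [])).div_const (Real.log 2)).const_sub 1).sub hu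
  have upper_tendsto : Tendsto (fun n => (Real.log 2 - H [] + δ n) / Real.log 2) atTop
      (nhds (1 - H [] / Real.log 2)) := by
    convert (hδ.const_add (Real.log 2 - H [])).div_const (Real.log 2) using 2
    have : Real.log 2 ≠ 0 := by positivity
    field_simp
    ring
  refine tendsto_of_tendsto_of_tendsto_of_le_of_le lower_tendsto upper_tendsto
    (fun n => ?_) fun n => hH.wordFreq_left_le n (hδ0 n)
  linarith [one_le_wordFreq_add Z T n (δ n), hH.wordFreq_right_le n (hδ0 n)]

end IsEntropyOf

/-- Contribution of one observation, of joint probabilities `a` and `b` with the two values of a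
bit, to the Bhattacharyya parameter of the bit. -/
noncomputable def bhattTerm (a b : ℝ) : ℝ := 2 * √(a * b)

/-- Contribution of one observation, of joint probabilities `a` and `b` with the two values of a
bit, to the total variation distance between the two conditional laws. -/
def tvTerm (a b : ℝ) : ℝ := |a - b|

/-- Contribution of one observation, of joint probabilities `a` and `b` with the two values of a
bit, to the conditional entropy of the bit, in nats. -/
noncomputable def entropyTerm (a b : ℝ) : ℝ :=
  Real.negMulLog a + Real.negMulLog b - Real.negMulLog (a + b)

section Terms

variable {a b c d : ℝ}

lemma bhattTerm_nonneg (a b : ℝ) : 0 ≤ bhattTerm a b := by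
  unfold bhattTerm
  positivity

lemma tvTerm_nonneg (a b : ℝ) : 0 ≤ tvTerm a b := abs_nonneg _

lemma bhattTerm_le_add (ha : 0 ≤ a) (hb : 0 ≤ b) : bhattTerm a b ≤ a + b := by
  rw [bhattTerm, Real.sqrt_mul ha]
  nlinarith [Real.sq_sqrt ha, Real.sq_sqrt hb, sq_nonneg (√a - √b)]

lemma tvTerm_le_add (ha : 0 ≤ a) (hb : 0 ≤ b) : tvTerm a b ≤ a + b := by
  rw [tvTerm, abs_le]
  constructor <;> linarith

lemma bhattTerm_sq (hab : 0 ≤ a * b) : bhattTerm a b ^ 2 = 4 * (a * b) := by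
  rw [bhattTerm, mul_pow, Real.sq_sqrt hab]
  norm_num

lemma bhattTerm_sq_add_tvTerm_sq (hab : 0 ≤ a * b) :
    bhattTerm a b ^ 2 + tvTerm a b ^ 2 = (a + b) ^ 2 := by
  rw [bhattTerm_sq hab, tvTerm, sq_abs]
  ring

lemma add_le_bhattTerm_add_tvTerm (ha : 0 ≤ a) (hb : 0 ≤ b) :
    a + b ≤ bhattTerm a b + tvTerm a b := by
  refine abs_le_of_sq_le_sq' ?_ (add_nonneg (bhattTerm_nonneg a b) (tvTerm_nonneg a b)) |>.2
  nlinarith [bhattTerm_sq_add_tvTerm_sq (mul_nonneg ha hb), bhattTerm_nonneg a b, tvTerm_nonneg a b]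

lemma bhattTerm_plus (hab : 0 ≤ a * b) :
    bhattTerm (a * c) (b * d) + bhattTerm (b * c) (a * d) = bhattTerm a b * bhattTerm c d := by
  unfold bhattTerm
  rw [show a * c * (b * d) = a * b * (c * d) by ring,
    show b * c * (a * d) = a * b * (c * d) by ring, Real.sqrt_mul hab]
  ring

lemma bhattTerm_minus_le (ha : 0 ≤ a) (hb : 0 ≤ b) (hc : 0 ≤ c) (hd : 0 ≤ d) :
    bhattTerm (a * c + b * d) (b * c + a * d) ≤
      (a + b) * bhattTerm c d + (c + d) * bhattTerm a b - bhattTerm a b * bhattTerm c d := by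
  have hP := bhattTerm_le_add ha hb
  have hQ := bhattTerm_le_add hc hd
  have sP := bhattTerm_sq (mul_nonneg ha hb)
  have sQ := bhattTerm_sq (mul_nonneg hc hd)
  have nP := bhattTerm_nonneg a b
  have nQ := bhattTerm_nonneg c d
  set P := bhattTerm a b
  set Q := bhattTerm c d
  refine abs_le_of_sq_le_sq' ?_ (by nlinarith) |>.2
  have minus_sq : bhattTerm (a * c + b * d) (b * c + a * d) ^ 2 =
      P ^ 2 * (c + d) ^ 2 + Q ^ 2 * (a + b) ^ 2 - P ^ 2 * Q ^ 2 := by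
    rw [bhattTerm_sq (by positivity), sP, sQ]
    ring
  rw [minus_sq]
  nlinarith [mul_nonneg (mul_nonneg nP nQ) (mul_nonneg (sub_nonneg.2 hP) (sub_nonneg.2 hQ))]

lemma tvTerm_minus (a b c d : ℝ) :
    tvTerm (a * c + b * d) (b * c + a * d) = tvTerm a b * tvTerm c d := by
  unfold tvTerm
  rw [← abs_mul]
  congr 1
  ring

lemma abs_add_abs_le_max (p q : ℝ) : |p| + |q| ≤ max |p + q| |p - q| := by
  rw [le_max_iff]
  grind

lemma tvTerm_plus_le (ha : 0 ≤ a) (hb : 0 ≤ b) (hc : 0 ≤ c) (hd : 0 ≤ d) :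
    tvTerm (a * c) (b * d) + tvTerm (b * c) (a * d) ≤
      (a + b) * tvTerm c d + (c + d) * tvTerm a b - tvTerm a b * tvTerm c d := by
  have hab := tvTerm_le_add ha hb
  have hcd := tvTerm_le_add hc hd
  have sum_eq : |a * c - b * d + (b * c - a * d)| = (a + b) * tvTerm c d := by
    rw [tvTerm, ← abs_of_nonneg (add_nonneg ha hb), ← abs_mul]
    ring_nf
  have diff_eq : |a * c - b * d - (b * c - a * d)| = (c + d) * tvTerm a b := by
    rw [tvTerm, ← abs_of_nonneg (add_nonneg hc hd), ← abs_mul]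
    ring_nf
  refine (abs_add_abs_le_max _ _).trans ?_
  rw [sum_eq, diff_eq]
  refine max_le ?_ ?_ <;> nlinarith [tvTerm_nonneg a b, tvTerm_nonneg c d]

lemma entropyTerm_chain (a b c d : ℝ) :
    entropyTerm (a * c + b * d) (b * c + a * d) +
        (entropyTerm (a * c) (b * d) + entropyTerm (b * c) (a * d)) =
      (a + b) * entropyTerm c d + (c + d) * entropyTerm a b := by
  unfold entropyTerm
  rw [show a * c + b * d + (b * c + a * d) = (a + b) * (c + d) by ring]
  simp only [Real.negMulLog_mul]
  ring

lemma entropyTerm_eq (ha : 0 ≤ a) (hb : 0 ≤ b) :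
    entropyTerm a b = a * Real.log ((a + b) / a) + b * Real.log ((a + b) / b) := by
  unfold entropyTerm Real.negMulLog
  rcases ha.eq_or_lt with rfl | ha
  · rcases eq_or_ne b 0 with rfl | hb0
    · simp
    · simp [hb0]
  rcases hb.eq_or_lt with rfl | hb
  · simp [ha.ne']
  rw [Real.log_div (by positivity) ha.ne', Real.log_div (by positivity) hb.ne']
  ring

section Log

variable {x w : ℝ}

lemma mul_log_div_nonneg (hx : 0 ≤ x) (hxw : x ≤ w) : 0 ≤ x * Real.log (w / x) := by
  rcases hx.eq_or_lt with rfl | hx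
  · simp
  · exact mul_nonneg hx.le (Real.log_nonneg ((one_le_div hx).2 hxw))

lemma mul_log_div_le (hx : 0 ≤ x) (hxw : x ≤ w) :
    x * Real.log (w / x) ≤ x * Real.log 2 + (w / 2 - x) := by
  rcases hx.eq_or_lt with rfl | hx
  · linarith
  have hw : 0 < w := hx.trans_le hxw
  calc x * Real.log (w / x) = x * Real.log 2 + x * Real.log (w / x / 2) := by
        rw [Real.log_div (by positivity) two_ne_zero]
        ring
    _ ≤ x * Real.log 2 + x * (w / x / 2 - 1) := by
        gcongr
        exact Real.log_le_sub_one_of_pos (by positivity)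
    _ = x * Real.log 2 + (w / 2 - x) := by field_simp

lemma le_mul_log_div (hx : 0 ≤ x) (hxw : x ≤ w) :
    x * Real.log 2 - x * (2 * x / w - 1) ≤ x * Real.log (w / x) := by
  rcases hx.eq_or_lt with rfl | hx
  · simp
  have hw : 0 < w := hx.trans_le hxw
  calc x * Real.log 2 - x * (2 * x / w - 1)
      ≤ x * Real.log 2 - x * Real.log (2 * x / w) := by
        gcongr
        exact Real.log_le_sub_one_of_pos (by positivity)
    _ = x * Real.log (w / x) := by
        rw [Real.log_div hw.ne' hx.ne', Real.log_div (by positivity) hw.ne',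
          Real.log_mul two_ne_zero hx.ne']
        ring

lemma mul_log_div_le_sqrt (hx : 0 ≤ x) (hxw : x ≤ w) :
    x * Real.log (w / x) ≤ 2 * (√x * √w - x) := by
  rcases hx.eq_or_lt with rfl | hx
  · simp
  have hw : 0 < w := hx.trans_le hxw
  calc x * Real.log (w / x) = x * (2 * Real.log (√w / √x)) := by
        rw [Real.log_div hw.ne' hx.ne', Real.log_div (by positivity) (by positivity),
          Real.log_sqrt hw.le, Real.log_sqrt hx.le]
        ring
    _ ≤ x * (2 * (√w / √x - 1)) := by
        gcongr
        exact Real.log_le_sub_one_of_pos (by positivity)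
    _ = 2 * (√x * √w - x) := by
        rw [mul_left_comm, mul_sub_one, ← mul_div_assoc, mul_comm x, mul_div_assoc,
          Real.div_sqrt, mul_comm √w]

end Log

lemma entropyTerm_nonneg (ha : 0 ≤ a) (hb : 0 ≤ b) : 0 ≤ entropyTerm a b := by
  rw [entropyTerm_eq ha hb]
  exact add_nonneg (mul_log_div_nonneg ha (le_add_of_nonneg_right hb))
    (mul_log_div_nonneg hb (le_add_of_nonneg_left ha))

lemma entropyTerm_le_mul_log_two (ha : 0 ≤ a) (hb : 0 ≤ b) :
    entropyTerm a b ≤ (a + b) * Real.log 2 := by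
  rw [entropyTerm_eq ha hb]
  linarith [mul_log_div_le ha (le_add_of_nonneg_right hb),
    mul_log_div_le hb (le_add_of_nonneg_left ha)]

lemma mul_log_two_sub_tvTerm_le (ha : 0 ≤ a) (hb : 0 ≤ b) :
    (a + b) * Real.log 2 - tvTerm a b ≤ entropyTerm a b := by
  have quadratic_le :
      a * (2 * a / (a + b) - 1) + b * (2 * b / (a + b) - 1) ≤ tvTerm a b := by
    rcases (add_nonneg ha hb).eq_or_lt with h | h
    · obtain ⟨rfl, rfl⟩ : a = 0 ∧ b = 0 := ⟨by linarith, by linarith⟩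
      simp [tvTerm]
    · calc _ = tvTerm a b * tvTerm a b / (a + b) := by
            rw [tvTerm, abs_mul_abs_self]
            field_simp
            ring
        _ ≤ tvTerm a b := by
            rw [div_le_iff₀ h]
            exact mul_le_mul_of_nonneg_left (tvTerm_le_add ha hb) (tvTerm_nonneg a b)
  rw [entropyTerm_eq ha hb]
  linarith [le_mul_log_div ha (le_add_of_nonneg_right hb),
    le_mul_log_div hb (le_add_of_nonneg_left ha)]

lemma entropyTerm_le_bhattTerm (ha : 0 ≤ a) (hb : 0 ≤ b) : entropyTerm a b ≤ bhattTerm a b := by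
  have amgm : (√a + √b) * √(a + b) ≤ a + b + √(a * b) := by
    have hab := Real.sq_sqrt (add_nonneg ha hb)
    rw [Real.sqrt_mul ha]
    nlinarith [Real.sq_sqrt ha, Real.sq_sqrt hb, sq_nonneg (√a + √b - √(a + b))]
  rw [entropyTerm_eq ha hb, bhattTerm]
  linarith [mul_log_div_le_sqrt ha (le_add_of_nonneg_right hb),
    mul_log_div_le_sqrt hb (le_add_of_nonneg_left ha)]

end Terms

/-- Total of the termwise functional `φ` over the observations of a bit: `W u s` is the joint
probability that the bit is `u` and the observation is `s`. -/
def lawSum {S : Type*} [Fintype S] (φ : ℝ → ℝ → ℝ) (W : ZMod 2 → S → ℝ) : ℝ :=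
  ∑ s, φ (W 0 s) (W 1 s)

/-- `W` is the joint law of a bit and an observation in `S`. -/
structure IsLaw {S : Type*} [Fintype S] (W : ZMod 2 → S → ℝ) : Prop where
  nonneg : ∀ u s, 0 ≤ W u s
  sum_eq_one : ∑ s, (W 0 s + W 1 s) = 1

/-- The minus transform: for two independent copies `(u₁, s₁)` and `(u₂, s₂)`, the joint law of
`u₁ + u₂` and `(s₁, s₂)`. -/
def minusLaw {S : Type*} (W : ZMod 2 → S → ℝ) : ZMod 2 → S × S → ℝ :=
  fun u s => ∑ v, W (u + v) s.1 * W v s.2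

/-- The plus transform: for two independent copies `(u₁, s₁)` and `(u₂, s₂)`, the joint law of
`u₂` and `((s₁, s₂), u₁ + u₂)`. -/
def plusLaw {S : Type*} (W : ZMod 2 → S → ℝ) : ZMod 2 → (S × S) × ZMod 2 → ℝ :=
  fun v s => W (s.2 + v) s.1.1 * W v s.1.2

lemma sum_zmod_two {M : Type*} [AddCommMonoid M] (f : ZMod 2 → M) : ∑ u, f u = f 0 + f 1 :=
  Fin.sum_univ_two f

section Laws

variable {S : Type*} [Fintype S] {W : ZMod 2 → S → ℝ}

lemma lawSum_comp_equiv {S' : Type*} [Fintype S'] (φ : ℝ → ℝ → ℝ) (e : S' ≃ S)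
    (W : ZMod 2 → S → ℝ) : lawSum φ (fun u s => W u (e s)) = lawSum φ W :=
  Equiv.sum_comp e fun s => φ (W 0 s) (W 1 s)

lemma lawSum_minusLaw (φ : ℝ → ℝ → ℝ) (W : ZMod 2 → S → ℝ) :
    lawSum φ (minusLaw W) = ∑ s, ∑ t,
      φ (W 0 s * W 0 t + W 1 s * W 1 t) (W 1 s * W 0 t + W 0 s * W 1 t) := by
  simp only [lawSum, minusLaw, Fintype.sum_prod_type, sum_zmod_two, zero_add, add_zero,
    CharTwo.add_self_eq_zero]

lemma lawSum_plusLaw (φ : ℝ → ℝ → ℝ) (W : ZMod 2 → S → ℝ) :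
    lawSum φ (plusLaw W) = ∑ s, ∑ t,
      (φ (W 0 s * W 0 t) (W 1 s * W 1 t) + φ (W 1 s * W 0 t) (W 0 s * W 1 t)) := by
  simp only [lawSum, plusLaw, Fintype.sum_prod_type, sum_zmod_two, zero_add, add_zero,
    CharTwo.add_self_eq_zero]

lemma sum_mul_lawSum (φ : ℝ → ℝ → ℝ) (W : ZMod 2 → S → ℝ) :
    ∑ s, ∑ t, φ (W 0 s) (W 1 s) * φ (W 0 t) (W 1 t) = lawSum φ W ^ 2 := by
  rw [sq, lawSum, sum_mul_sum]

lemma IsLaw.sum_cross (hW : IsLaw W) (φ : ℝ → ℝ → ℝ) :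
    ∑ s, ∑ t, ((W 0 s + W 1 s) * φ (W 0 t) (W 1 t) + (W 0 t + W 1 t) * φ (W 0 s) (W 1 s)) =
      2 * lawSum φ W := by
  have total := hW.sum_eq_one
  simp only [sum_add_distrib, ← mul_sum, ← sum_mul] at total ⊢
  rw [total, lawSum]
  ring

lemma lawSum_bhattTerm_nonneg (W : ZMod 2 → S → ℝ) : 0 ≤ lawSum bhattTerm W :=
  sum_nonneg fun _ _ => bhattTerm_nonneg _ _

lemma lawSum_tvTerm_nonneg (W : ZMod 2 → S → ℝ) : 0 ≤ lawSum tvTerm W :=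
  sum_nonneg fun _ _ => tvTerm_nonneg _ _

lemma lawSum_tvTerm_minusLaw (W : ZMod 2 → S → ℝ) :
    lawSum tvTerm (minusLaw W) = lawSum tvTerm W ^ 2 := by
  simp only [lawSum_minusLaw, tvTerm_minus, sum_mul_lawSum]

lemma lawSum_add_minusLaw (W : ZMod 2 → S → ℝ) :
    lawSum (· + ·) (minusLaw W) = lawSum (· + ·) W ^ 2 := by
  rw [lawSum_minusLaw, ← sum_mul_lawSum]
  exact sum_congr rfl fun s _ => sum_congr rfl fun t _ => by ring

lemma lawSum_add_plusLaw (W : ZMod 2 → S → ℝ) :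
    lawSum (· + ·) (plusLaw W) = lawSum (· + ·) W ^ 2 := by
  rw [lawSum_plusLaw, ← sum_mul_lawSum]
  exact sum_congr rfl fun s _ => sum_congr rfl fun t _ => by ring

namespace IsLaw

lemma lawSum_bhattTerm_plusLaw (hW : IsLaw W) :
    lawSum bhattTerm (plusLaw W) = lawSum bhattTerm W ^ 2 := by
  rw [lawSum_plusLaw, ← sum_mul_lawSum]
  exact sum_congr rfl fun s _ => sum_congr rfl fun t _ =>
    bhattTerm_plus (mul_nonneg (hW.nonneg 0 s) (hW.nonneg 1 s))

lemma lawSum_bhattTerm_minusLaw_le (hW : IsLaw W) :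
    lawSum bhattTerm (minusLaw W) ≤ 2 * lawSum bhattTerm W - lawSum bhattTerm W ^ 2 := by
  rw [lawSum_minusLaw, ← hW.sum_cross, ← sum_mul_lawSum, ← sum_sub_distrib]
  simp only [← sum_sub_distrib]
  exact sum_le_sum fun s _ => sum_le_sum fun t _ =>
    bhattTerm_minus_le (hW.nonneg 0 s) (hW.nonneg 1 s) (hW.nonneg 0 t) (hW.nonneg 1 t)

lemma lawSum_tvTerm_plusLaw_le (hW : IsLaw W) :
    lawSum tvTerm (plusLaw W) ≤ 2 * lawSum tvTerm W - lawSum tvTerm W ^ 2 := by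
  rw [lawSum_plusLaw, ← hW.sum_cross, ← sum_mul_lawSum, ← sum_sub_distrib]
  simp only [← sum_sub_distrib]
  exact sum_le_sum fun s _ => sum_le_sum fun t _ =>
    tvTerm_plus_le (hW.nonneg 0 s) (hW.nonneg 1 s) (hW.nonneg 0 t) (hW.nonneg 1 t)

lemma lawSum_entropyTerm_add (hW : IsLaw W) :
    lawSum entropyTerm (minusLaw W) + lawSum entropyTerm (plusLaw W) =
      2 * lawSum entropyTerm W := by
  simp only [lawSum_minusLaw, lawSum_plusLaw, ← hW.sum_cross, ← sum_add_distrib, entropyTerm_chain]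

lemma one_le_lawSum_add (hW : IsLaw W) : 1 ≤ lawSum bhattTerm W + lawSum tvTerm W := by
  rw [← hW.sum_eq_one, lawSum, lawSum, ← sum_add_distrib]
  exact sum_le_sum fun s _ => add_le_bhattTerm_add_tvTerm (hW.nonneg 0 s) (hW.nonneg 1 s)

lemma lawSum_sq_add_sq_le (hW : IsLaw W) :
    lawSum bhattTerm W ^ 2 + lawSum tvTerm W ^ 2 ≤ 1 := by
  have ht (s : S) := tvTerm_le_add (hW.nonneg 0 s) (hW.nonneg 1 s)
  have hab (s : S) : 0 ≤ W 0 s * W 1 s := mul_nonneg (hW.nonneg 0 s) (hW.nonneg 1 s)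
  have cauchy_schwarz : lawSum bhattTerm W ^ 2 ≤
      (∑ s, (W 0 s + W 1 s - tvTerm (W 0 s) (W 1 s))) *
        ∑ s, (W 0 s + W 1 s + tvTerm (W 0 s) (W 1 s)) :=
    sum_sq_le_sum_mul_sum_of_sq_le_mul _ (fun s _ => sub_nonneg.2 (ht s))
      (fun s _ => add_nonneg ((tvTerm_nonneg _ _).trans (ht s)) (tvTerm_nonneg _ _))
      fun s _ => by linarith [bhattTerm_sq_add_tvTerm_sq (hab s)]
  rw [sum_sub_distrib, sum_add_distrib (g := fun s => tvTerm _ _), hW.sum_eq_one] at cauchy_schwarz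
  unfold lawSum at *
  nlinarith

lemma lawSum_entropyTerm_nonneg (hW : IsLaw W) : 0 ≤ lawSum entropyTerm W :=
  sum_nonneg fun s _ => entropyTerm_nonneg (hW.nonneg 0 s) (hW.nonneg 1 s)

lemma lawSum_entropyTerm_le_lawSum_bhattTerm (hW : IsLaw W) :
    lawSum entropyTerm W ≤ lawSum bhattTerm W :=
  sum_le_sum fun s _ => entropyTerm_le_bhattTerm (hW.nonneg 0 s) (hW.nonneg 1 s)

lemma lawSum_entropyTerm_le_log_two (hW : IsLaw W) : lawSum entropyTerm W ≤ Real.log 2 := by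
  rw [← one_mul (Real.log 2), ← hW.sum_eq_one, sum_mul]
  exact sum_le_sum fun s _ => entropyTerm_le_mul_log_two (hW.nonneg 0 s) (hW.nonneg 1 s)

lemma log_two_sub_lawSum_entropyTerm_le (hW : IsLaw W) :
    Real.log 2 - lawSum entropyTerm W ≤ lawSum tvTerm W := by
  rw [sub_le_comm, ← one_mul (Real.log 2), ← hW.sum_eq_one, sum_mul, lawSum, ← sum_sub_distrib]
  exact sum_le_sum fun s _ => mul_log_two_sub_tvTerm_le (hW.nonneg 0 s) (hW.nonneg 1 s)

end IsLaw

end Laws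

/-- `Fin (2 ^ (n + 1))` as a leading (most significant) bit and the remaining index. -/
def highBitEquiv (n : ℕ) : Fin 2 × Fin (2 ^ n) ≃ Fin (2 ^ (n + 1)) :=
  finProdFinEquiv.trans (finCongr (by rw [pow_succ, Nat.mul_comm]))

/-- `Fin (2 ^ (n + 1))` as the remaining index and a trailing (least significant) bit. -/
def lowBitEquiv (n : ℕ) : Fin (2 ^ n) × Fin 2 ≃ Fin (2 ^ (n + 1)) :=
  finProdFinEquiv.trans (finCongr (by rw [pow_succ]))

lemma highBitEquiv_val (n : ℕ) (a : Fin 2) (i : Fin (2 ^ n)) :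
    (highBitEquiv n (a, i)).val = i.val + 2 ^ n * a.val :=
  rfl

lemma lowBitEquiv_val (n : ℕ) (i : Fin (2 ^ n)) (b : Fin 2) :
    (lowBitEquiv n (i, b)).val = b.val + 2 * i.val :=
  rfl

lemma lowBitEquiv_lt_iff {n : ℕ} {i j : Fin (2 ^ n)} {b c : Fin 2} :
    lowBitEquiv n (i, b) < lowBitEquiv n (j, c) ↔ i < j ∨ i = j ∧ b < c := by
  simp only [Fin.lt_def, Fin.ext_iff, lowBitEquiv_val]
  omega

lemma lowBitEquiv_highBitEquiv (n : ℕ) (a b : Fin 2) (i : Fin (2 ^ n)) :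
    lowBitEquiv (n + 1) (highBitEquiv n (a, i), b) =
      highBitEquiv (n + 1) (a, lowBitEquiv n (i, b)) := by
  apply Fin.ext
  simp only [highBitEquiv_val, lowBitEquiv_val, pow_succ]
  ring

lemma lowBitEquiv_zero_eq (i : Fin (2 ^ 0)) (a : Fin 2) :
    lowBitEquiv 0 (i, a) = highBitEquiv 0 (a, i) := by
  apply Fin.ext
  have := i.isLt
  simp only [highBitEquiv_val, lowBitEquiv_val]
  omega

lemma br_highBitEquiv (n : ℕ) (a : Fin 2) (i : Fin (2 ^ n)) :
    br (n + 1) (highBitEquiv n (a, i)) = lowBitEquiv n (br n i, a) := by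
  simp [br, highBitEquiv, lowBitEquiv]

lemma Fpow_highBitEquiv (n : ℕ) (a b : Fin 2) (i j : Fin (2 ^ n)) :
    Fpow (n + 1) (highBitEquiv n (a, i)) (highBitEquiv n (b, j)) = Fker a b * Fpow n i j := by
  simp only [Fpow, highBitEquiv, Matrix.reindex_apply, Matrix.submatrix_apply,
    Matrix.kroneckerMap_apply, Equiv.symm_apply_apply]

lemma Fpow_lowBitEquiv (n : ℕ) (a b : Fin 2) (i j : Fin (2 ^ n)) :
    Fpow (n + 1) (lowBitEquiv n (i, a)) (lowBitEquiv n (j, b)) = Fpow n i j * Fker a b := by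
  induction n with
  | zero => rw [lowBitEquiv_zero_eq, lowBitEquiv_zero_eq, Fpow_highBitEquiv, mul_comm]
  | succ n ih =>
    obtain ⟨⟨a', i'⟩, rfl⟩ := (highBitEquiv n).surjective i
    obtain ⟨⟨b', j'⟩, rfl⟩ := (highBitEquiv n).surjective j
    rw [lowBitEquiv_highBitEquiv, lowBitEquiv_highBitEquiv, Fpow_highBitEquiv, ih,
      Fpow_highBitEquiv, mul_assoc]

/-- A vector of length `2 ^ (n + 1)` as the pair of its two halves. -/
def halvesEquiv (n : ℕ) (A : Type*) :
    (Fin (2 ^ (n + 1)) → A) ≃ (Fin (2 ^ n) → A) × (Fin (2 ^ n) → A) :=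
  ((highBitEquiv n).symm.arrowCongr (Equiv.refl A)).trans <|
    (Equiv.curry _ _ _).trans (finTwoArrowEquiv _)

lemma halvesEquiv_fst_apply {n : ℕ} {A : Type*} (x : Fin (2 ^ (n + 1)) → A) (i : Fin (2 ^ n)) :
    (halvesEquiv n A x).1 i = x (highBitEquiv n (0, i)) :=
  rfl

lemma halvesEquiv_snd_apply {n : ℕ} {A : Type*} (x : Fin (2 ^ (n + 1)) → A) (i : Fin (2 ^ n)) :
    (halvesEquiv n A x).2 i = x (highBitEquiv n (1, i)) :=
  rfl

lemma prod_halvesEquiv {M A : Type*} [CommMonoid M] (n : ℕ) (f : A → M)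
    (x : Fin (2 ^ (n + 1)) → A) :
    ∏ i, f (x i) = (∏ i, f ((halvesEquiv n A x).1 i)) * ∏ i, f ((halvesEquiv n A x).2 i) := by
  rw [← (highBitEquiv n).prod_comp, Fintype.prod_prod_type, Fin.prod_univ_two]
  rfl

lemma polarU_lowBitEquiv (n : ℕ) (x : Fin (2 ^ (n + 1)) → ZMod 2) (j : Fin (2 ^ n)) (b : Fin 2) :
    polarU (n + 1) x (lowBitEquiv n (j, b)) =
      polarU n (halvesEquiv n _ x).1 j * Fker 0 b +
        polarU n (halvesEquiv n _ x).2 j * Fker 1 b := by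
  simp only [polarU, ← (highBitEquiv n).sum_comp, Fintype.sum_prod_type, Fin.sum_univ_two,
    sum_mul, br_highBitEquiv, Fpow_lowBitEquiv, mul_assoc, halvesEquiv_fst_apply,
    halvesEquiv_snd_apply]

lemma polarU_lowBitEquiv_zero (n : ℕ) (x : Fin (2 ^ (n + 1)) → ZMod 2) (j : Fin (2 ^ n)) :
    polarU (n + 1) x (lowBitEquiv n (j, 0)) =
      polarU n (halvesEquiv n _ x).1 j + polarU n (halvesEquiv n _ x).2 j := by
  simp [polarU_lowBitEquiv, Fker]

lemma polarU_lowBitEquiv_one (n : ℕ) (x : Fin (2 ^ (n + 1)) → ZMod 2) (j : Fin (2 ^ n)) :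
    polarU (n + 1) x (lowBitEquiv n (j, 1)) = polarU n (halvesEquiv n _ x).2 j := by
  simp [polarU_lowBitEquiv, Fker]

lemma polarU_zero (x : Fin (2 ^ 0) → ZMod 2) (j : Fin (2 ^ 0)) : polarU 0 x j = x j :=
  congrFun (Matrix.vecMul_one x) j

/-- The possible values of the prefix `U_1^{j-1}`. -/
abbrev Prefix (n : ℕ) (j : Fin (2 ^ n)) : Type := {i : Fin (2 ^ n) // i < j} → ZMod 2

/-- The prefix `U_1^{j-1}` of the polar transform of `x`. -/
noncomputable def polarPrefix (n : ℕ) (j : Fin (2 ^ n)) (x : Fin (2 ^ n) → ZMod 2) : Prefix n j :=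
  fun i => polarU n x i

/-- A prefix before an even position consists of pairs `(u + v, v)`; it is recorded as the two
shorter prefixes made of the `u` and of the `v`. -/
def evenPrefixEquiv (n : ℕ) (j : Fin (2 ^ n)) :
    Prefix (n + 1) (lowBitEquiv n (j, 0)) ≃ Prefix n j × Prefix n j where
  toFun r :=
    (fun i => r ⟨lowBitEquiv n (i, 0), lowBitEquiv_lt_iff.2 (.inl i.2)⟩ +
        r ⟨lowBitEquiv n (i, 1), lowBitEquiv_lt_iff.2 (.inl i.2)⟩,
      fun i => r ⟨lowBitEquiv n (i, 1), lowBitEquiv_lt_iff.2 (.inl i.2)⟩)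
  invFun z k :=
    have h : ((lowBitEquiv n).symm k).1 < j := by
      obtain ⟨k, hk⟩ := k
      obtain ⟨⟨i, b⟩, rfl⟩ := (lowBitEquiv n).surjective k
      simpa [lowBitEquiv_lt_iff] using hk
    if ((lowBitEquiv n).symm k).2 = 0 then z.1 ⟨_, h⟩ + z.2 ⟨_, h⟩ else z.2 ⟨_, h⟩
  left_inv r := by
    funext ⟨k, hk⟩
    obtain ⟨⟨i, b⟩, rfl⟩ := (lowBitEquiv n).surjective k
    fin_cases b <;> simp [CharTwo.add_cancel_right]
  right_inv z := by
    ext i <;> simp [CharTwo.add_cancel_right]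

/-- A prefix before an odd position is a prefix before the preceding even position together with
the bit at that position. -/
def oddPrefixEquiv (n : ℕ) (j : Fin (2 ^ n)) :
    Prefix (n + 1) (lowBitEquiv n (j, 1)) ≃ Prefix (n + 1) (lowBitEquiv n (j, 0)) × ZMod 2 where
  toFun r :=
    (fun i => r ⟨i, i.2.trans (lowBitEquiv_lt_iff.2 (.inr ⟨rfl, Fin.zero_lt_one⟩))⟩,
      r ⟨lowBitEquiv n (j, 0), lowBitEquiv_lt_iff.2 (.inr ⟨rfl, Fin.zero_lt_one⟩)⟩)
  invFun z k := if h : k.1 < lowBitEquiv n (j, 0) then z.1 ⟨k, h⟩ else z.2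
  left_inv r := by
    funext ⟨k, hk⟩
    by_cases h : k < lowBitEquiv n (j, 0)
    · simp [h]
    · have : k = lowBitEquiv n (j, 0) := by
        simp only [Fin.lt_def, Fin.ext_iff, lowBitEquiv_val, Fin.val_zero, Fin.val_one] at h hk ⊢
        omega
      simp [this]
  right_inv z := by
    ext i
    · simp [i.2]
    · simp

lemma evenPrefixEquiv_polarPrefix (n : ℕ) (j : Fin (2 ^ n)) (x : Fin (2 ^ (n + 1)) → ZMod 2) :
    evenPrefixEquiv n j (polarPrefix (n + 1) (lowBitEquiv n (j, 0)) x) =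
      (polarPrefix n j (halvesEquiv n _ x).1, polarPrefix n j (halvesEquiv n _ x).2) := by
  ext i <;> simp [evenPrefixEquiv, polarPrefix, polarU_lowBitEquiv_zero, polarU_lowBitEquiv_one,
    CharTwo.add_cancel_right]

lemma oddPrefixEquiv_polarPrefix (n : ℕ) (j : Fin (2 ^ n)) (x : Fin (2 ^ (n + 1)) → ZMod 2) :
    oddPrefixEquiv n j (polarPrefix (n + 1) (lowBitEquiv n (j, 1)) x) =
      (polarPrefix (n + 1) (lowBitEquiv n (j, 0)) x,
        polarU n (halvesEquiv n _ x).1 j + polarU n (halvesEquiv n _ x).2 j) :=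
  Prod.ext rfl (polarU_lowBitEquiv_zero n x j)

open Classical in
/-- The joint law of the bit `U` and the observation `V`, both functions of a sample `a` of
probability `w a`. -/
noncomputable def jointLaw {A S : Type*} [Fintype A] (w : A → ℝ) (U : A → ZMod 2) (V : A → S) :
    ZMod 2 → S → ℝ :=
  fun u s => ∑ a with U a = u ∧ V a = s, w a

section JointLaw

variable {A B S T : Type*} [Fintype A] [Fintype B]

lemma jointLaw_congr_equiv {w : A → ℝ} {U : A → ZMod 2} {V : A → S} {w' : B → ℝ}
    {U' : B → ZMod 2} {V' : B → T} (e : A ≃ B) (f : S ≃ T) (hw : ∀ a, w a = w' (e a))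
    (hU : ∀ a, U a = U' (e a)) (hV : ∀ a, f (V a) = V' (e a)) (u : ZMod 2) (s : S) :
    jointLaw w U V u s = jointLaw w' U' V' u (f s) := by
  classical
  simp only [jointLaw, sum_filter]
  exact Fintype.sum_equiv e _ _ fun a => by
    simp only [hw, hU, ← hV, f.injective.eq_iff]

lemma jointLaw_add_prod (w : A → ℝ) (U : A → ZMod 2) (V : A → S) (w' : B → ℝ) (U' : B → ZMod 2)
    (V' : B → T) (u : ZMod 2) (s : S) (t : T) :
    jointLaw (fun a : A × B => w a.1 * w' a.2) (fun a => U a.1 + U' a.2)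
        (fun a => (V a.1, V' a.2)) u (s, t) =
      ∑ v, jointLaw w U V (u + v) s * jointLaw w' U' V' v t := by
  classical
  simp only [jointLaw, sum_filter, Fintype.sum_prod_type, sum_mul_sum]
  rw [eq_comm, sum_comm]
  refine sum_congr rfl fun a _ => sum_comm.trans <| sum_congr rfl fun b _ => ?_
  rw [Fintype.sum_eq_single (U' b) fun v hv => by simp [hv.symm], ite_zero_mul_ite_zero]
  simp only [CharTwo.add_eq_iff_eq_add, Prod.mk.injEq, true_and, and_assoc]

lemma jointLaw_snd_prod (w : A → ℝ) (U : A → ZMod 2) (V : A → S) (w' : B → ℝ) (U' : B → ZMod 2)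
    (V' : B → T) (u v : ZMod 2) (s : S) (t : T) :
    jointLaw (fun a : A × B => w a.1 * w' a.2) (fun a => U' a.2)
        (fun a => ((V a.1, V' a.2), U a.1 + U' a.2)) v ((s, t), u) =
      jointLaw w U V (u + v) s * jointLaw w' U' V' v t := by
  classical
  simp only [jointLaw, sum_filter, Fintype.sum_prod_type, sum_mul_sum, ite_zero_mul_ite_zero]
  refine sum_congr rfl fun a _ => sum_congr rfl fun b _ => if_congr ?_ rfl rfl
  simp only [Prod.mk.injEq, CharTwo.add_eq_iff_eq_add]
  constructor
  · rintro ⟨rfl, ⟨hs, ht⟩, hu⟩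
    exact ⟨⟨hu, hs⟩, rfl, ht⟩
  · rintro ⟨⟨hu, hs⟩, rfl, ht⟩
    exact ⟨rfl, ⟨hs, ht⟩, hu⟩

end JointLaw

section PolarLaw

variable {Y : Type*} [Fintype Y]

/-- The joint law of `U_j` and the observation `(U_1^{j-1}, Y^N)`. -/
noncomputable def polarLaw (n : ℕ) (p : ZMod 2 × Y → ℝ) (j : Fin (2 ^ n)) :
    ZMod 2 → Prefix n j × (Fin (2 ^ n) → Y) → ℝ :=
  fun u s => prUY n p j u s.1 s.2

lemma prUY_eq_jointLaw (n : ℕ) (p : ZMod 2 × Y → ℝ) (j : Fin (2 ^ n)) (u : ZMod 2)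
    (r : Prefix n j) (y : Fin (2 ^ n) → Y) :
    prUY n p j u r y =
      jointLaw (fun x => ∏ i, p (x i, y i)) (fun x => polarU n x j) (polarPrefix n j) u r := by
  simp only [prUY, jointLaw, polarPrefix, funext_iff]

/-- Regroups the observation of an even position into the observations of two copies of the
shorter transform. -/
def evenObsEquiv (n : ℕ) (j : Fin (2 ^ n)) (Y : Type*) :
    Prefix (n + 1) (lowBitEquiv n (j, 0)) × (Fin (2 ^ (n + 1)) → Y) ≃
      (Prefix n j × (Fin (2 ^ n) → Y)) × (Prefix n j × (Fin (2 ^ n) → Y)) :=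
  ((evenPrefixEquiv n j).prodCongr (halvesEquiv n Y)).trans (Equiv.prodProdProdComm _ _ _ _)

/-- Regroups the observation of an odd position into the observations of two copies of the
shorter transform and the bit at the preceding even position. -/
def oddObsEquiv (n : ℕ) (j : Fin (2 ^ n)) (Y : Type*) :
    Prefix (n + 1) (lowBitEquiv n (j, 1)) × (Fin (2 ^ (n + 1)) → Y) ≃
      ((Prefix n j × (Fin (2 ^ n) → Y)) × (Prefix n j × (Fin (2 ^ n) → Y))) × ZMod 2 :=
  ((oddPrefixEquiv n j).prodCongr (Equiv.refl _)).trans <|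
    (Equiv.prodAssoc _ _ _).trans <| ((Equiv.refl _).prodCongr (Equiv.prodComm _ _)).trans <|
      (Equiv.prodAssoc _ _ _).symm.trans <| (evenObsEquiv n j Y).prodCongr (Equiv.refl _)

lemma polarLaw_lowBitEquiv_zero (n : ℕ) (p : ZMod 2 × Y → ℝ) (j : Fin (2 ^ n)) :
    polarLaw (n + 1) p (lowBitEquiv n (j, 0)) =
      fun u s => minusLaw (polarLaw n p j) u (evenObsEquiv n j Y s) := by
  funext u ⟨r, y⟩
  simp only [polarLaw, minusLaw, prUY_eq_jointLaw]
  rw [← jointLaw_add_prod]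
  exact jointLaw_congr_equiv (halvesEquiv n _) (evenPrefixEquiv n j)
    (fun x => prod_halvesEquiv n p fun i => (x i, y i)) (fun x => polarU_lowBitEquiv_zero n x j)
    (evenPrefixEquiv_polarPrefix n j) u r

lemma polarLaw_lowBitEquiv_one (n : ℕ) (p : ZMod 2 × Y → ℝ) (j : Fin (2 ^ n)) :
    polarLaw (n + 1) p (lowBitEquiv n (j, 1)) =
      fun u s => plusLaw (polarLaw n p j) u (oddObsEquiv n j Y s) := by
  funext u ⟨r, y⟩
  simp only [polarLaw, plusLaw, prUY_eq_jointLaw]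
  rw [← jointLaw_snd_prod]
  refine jointLaw_congr_equiv (halvesEquiv n _)
    ((oddPrefixEquiv n j).trans ((evenPrefixEquiv n j).prodCongr (Equiv.refl _)))
    (fun x => prod_halvesEquiv n p fun i => (x i, y i)) (fun x => polarU_lowBitEquiv_one n x j)
    (fun x => ?_) u r
  simp [oddPrefixEquiv_polarPrefix, evenPrefixEquiv_polarPrefix]

lemma lawSum_polarLaw_lowBitEquiv_zero (φ : ℝ → ℝ → ℝ) (n : ℕ) (p : ZMod 2 × Y → ℝ)
    (j : Fin (2 ^ n)) :
    lawSum φ (polarLaw (n + 1) p (lowBitEquiv n (j, 0))) =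
      lawSum φ (minusLaw (polarLaw n p j)) := by
  rw [polarLaw_lowBitEquiv_zero, lawSum_comp_equiv]

lemma lawSum_polarLaw_lowBitEquiv_one (φ : ℝ → ℝ → ℝ) (n : ℕ) (p : ZMod 2 × Y → ℝ)
    (j : Fin (2 ^ n)) :
    lawSum φ (polarLaw (n + 1) p (lowBitEquiv n (j, 1))) =
      lawSum φ (plusLaw (polarLaw n p j)) := by
  rw [polarLaw_lowBitEquiv_one, lawSum_comp_equiv]

lemma polarLaw_zero (p : ZMod 2 × Y → ℝ) (j : Fin (2 ^ 0)) (u : ZMod 2)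
    (s : Prefix 0 j × (Fin (2 ^ 0) → Y)) : polarLaw 0 p j u s = p (u, s.2 0) := by
  have hj (k : Fin (2 ^ 0)) : k = 0 := Subsingleton.elim (α := Fin 1) k 0
  have single (x : Fin (2 ^ 0) → ZMod 2) : x 0 = u ↔ x = fun _ => u :=
    ⟨fun h => funext fun k => by rw [hj k, h], fun h => by rw [h]⟩
  obtain rfl := hj j
  simp [polarLaw, prUY, polarU_zero, single, hj, sum_filter]

lemma lawSum_polarLaw_zero (φ : ℝ → ℝ → ℝ) (p : ZMod 2 × Y → ℝ) (j : Fin (2 ^ 0)) :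
    lawSum φ (polarLaw 0 p j) = ∑ y, φ (p (0, y)) (p (1, y)) := by
  obtain rfl : j = 0 := Subsingleton.elim (α := Fin 1) j 0
  have : IsEmpty {i : Fin (2 ^ 0) // i < 0} := ⟨fun i => absurd i.2 (Fin.not_lt_zero _)⟩
  simp only [lawSum, polarLaw_zero, Fintype.sum_prod_type, Fintype.sum_unique]
  exact Equiv.sum_comp (Equiv.funUnique (Fin 1) Y) fun y => φ (p (0, y)) (p (1, y))

lemma isLaw_polarLaw (n : ℕ) {p : ZMod 2 × Y → ℝ} (hp : ∀ z, 0 ≤ p z) (hsum : ∑ z, p z = 1)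
    (j : Fin (2 ^ n)) : IsLaw (polarLaw n p j) where
  nonneg _ _ := sum_nonneg fun _ _ => prod_nonneg fun _ _ => hp _
  sum_eq_one := by
    change lawSum (· + ·) (polarLaw n p j) = 1
    induction n with
    | zero =>
      rw [lawSum_polarLaw_zero, ← hsum, Fintype.sum_prod_type, sum_zmod_two, sum_add_distrib]
    | succ n ih =>
      obtain ⟨⟨i, b⟩, rfl⟩ := (lowBitEquiv n).surjective j
      fin_cases b
      · exact (lawSum_polarLaw_lowBitEquiv_zero _ n p i).trans
          ((lawSum_add_minusLaw _).trans (by rw [ih, one_pow]))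
      · exact (lawSum_polarLaw_lowBitEquiv_one _ n p i).trans
          ((lawSum_add_plusLaw _).trans (by rw [ih, one_pow]))

lemma Zcond_eq_lawSum (n : ℕ) (p : ZMod 2 × Y → ℝ) (j : Fin (2 ^ n)) :
    Zcond n p j = lawSum bhattTerm (polarLaw n p j) := by
  simp only [Zcond, lawSum, polarLaw, bhattTerm, Fintype.sum_prod_type, mul_sum]

lemma entXY_eq_sum_entropyTerm {p : ZMod 2 × Y → ℝ} (hp : ∀ z, 0 ≤ p z) :
    entXY p = (∑ y, entropyTerm (p (0, y)) (p (1, y))) / Real.log 2 := by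
  simp only [entXY, sum_zmod_two, ← sum_add_distrib, ← sum_neg_distrib, sum_div]
  refine sum_congr rfl fun y _ => ?_
  rw [entropyTerm_eq (hp _) (hp _), ← inv_div (p (0, y)), ← inv_div (p (1, y)), Real.log_inv,
    Real.log_inv]
  simp only [Real.logb]
  ring

end PolarLaw

/-- The index in `Fin (2 ^ l.length)` whose binary digits, least significant first, are `l`. -/
def pathIndex : (l : List (Fin 2)) → Fin (2 ^ l.length)
  | [] => 0
  | b :: l => lowBitEquiv l.length (pathIndex l, b)

lemma wordAvg_pathIndex (n : ℕ) (F : (m : ℕ) → Fin (2 ^ m) → ℝ) :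
    wordAvg n (fun l => F l.length (pathIndex l)) = (∑ j, F n j) / 2 ^ n := by
  induction n generalizing F with
  | zero => simp [wordAvg, pathIndex]
  | succ n ih =>
    refine (ih fun m i =>
      (F (m + 1) (lowBitEquiv m (i, 0)) + F (m + 1) (lowBitEquiv m (i, 1))) / 2).trans ?_
    rw [← (lowBitEquiv n).sum_comp, Fintype.sum_prod_type, ← sum_div, div_div, pow_succ' (2 : ℝ)]
    simp only [Fin.sum_univ_two]

open Classical in
lemma wordFreq_pathIndex (n : ℕ) (P : (m : ℕ) → Fin (2 ^ m) → Prop) :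
    wordFreq n {l | P l.length (pathIndex l)} = #{j | P n j} / (2 ^ n : ℕ) := by
  refine (wordAvg_pathIndex n fun m j => if P m j then 1 else 0).trans ?_
  rw [sum_boole, Nat.cast_pow, Nat.cast_ofNat]

section Conditional

variable {Y : Type*} [Fintype Y] {p : ZMod 2 × Y → ℝ}

/-- The total of `φ` over the law of `U_j` and its observation, where `j` is the index reached
along the branch `l`. -/
noncomputable def branchSum (p : ZMod 2 × Y → ℝ) (φ : ℝ → ℝ → ℝ) (l : List (Fin 2)) : ℝ :=
  lawSum φ (polarLaw l.length p (pathIndex l))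

lemma branchSum_zero_cons (φ : ℝ → ℝ → ℝ) (l : List (Fin 2)) :
    branchSum p φ (0 :: l) = lawSum φ (minusLaw (polarLaw l.length p (pathIndex l))) :=
  lawSum_polarLaw_lowBitEquiv_zero φ l.length p (pathIndex l)

lemma branchSum_one_cons (φ : ℝ → ℝ → ℝ) (l : List (Fin 2)) :
    branchSum p φ (1 :: l) = lawSum φ (plusLaw (polarLaw l.length p (pathIndex l))) :=
  lawSum_polarLaw_lowBitEquiv_one φ l.length p (pathIndex l)

lemma isPolarPair_branchSum (hp : ∀ z, 0 ≤ p z) (hsum : ∑ z, p z = 1) :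
    IsPolarPair (branchSum p bhattTerm) (branchSum p tvTerm) where
  nonneg_left _ := lawSum_bhattTerm_nonneg _
  nonneg_right _ := lawSum_tvTerm_nonneg _
  sq_add_sq_le l := (isLaw_polarLaw l.length hp hsum _).lawSum_sq_add_sq_le
  one_le_add l := (isLaw_polarLaw l.length hp hsum _).one_le_lawSum_add
  left_zero_le l := by
    rw [branchSum_zero_cons]
    exact (isLaw_polarLaw l.length hp hsum _).lawSum_bhattTerm_minusLaw_le
  left_one l := by
    rw [branchSum_one_cons]
    exact (isLaw_polarLaw l.length hp hsum _).lawSum_bhattTerm_plusLaw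
  right_zero l := by
    rw [branchSum_zero_cons]
    exact lawSum_tvTerm_minusLaw _
  right_one_le l := by
    rw [branchSum_one_cons]
    exact (isLaw_polarLaw l.length hp hsum _).lawSum_tvTerm_plusLaw_le

lemma isEntropyOf_branchSum (hp : ∀ z, 0 ≤ p z) (hsum : ∑ z, p z = 1) :
    IsEntropyOf (branchSum p entropyTerm) (branchSum p bhattTerm) (branchSum p tvTerm) where
  add_eq l := by
    rw [branchSum_zero_cons, branchSum_one_cons]
    exact (isLaw_polarLaw l.length hp hsum _).lawSum_entropyTerm_add
  nonneg l := (isLaw_polarLaw l.length hp hsum _).lawSum_entropyTerm_nonneg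
  le_log_two l := (isLaw_polarLaw l.length hp hsum _).lawSum_entropyTerm_le_log_two
  le_left l := (isLaw_polarLaw l.length hp hsum _).lawSum_entropyTerm_le_lawSum_bhattTerm
  log_two_sub_le l := (isLaw_polarLaw l.length hp hsum _).log_two_sub_lawSum_entropyTerm_le

lemma branchSum_entropyTerm_nil (hp : ∀ z, 0 ≤ p z) :
    branchSum p entropyTerm [] / Real.log 2 = entXY p := by
  rw [entXY_eq_sum_entropyTerm hp]
  exact congrArg (· / Real.log 2) (lawSum_polarLaw_zero entropyTerm p _)

lemma card_HXYset_div (n : ℕ) (β : ℝ) :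
    ((HXYset n p β).card : ℝ) / (2 ^ n : ℕ) =
      wordFreq n {l | 1 - deltaN n β ≤ branchSum p bhattTerm l} := by
  refine (wordFreq_pathIndex n fun m j => 1 - deltaN n β ≤ Zcond m p j).symm.trans ?_
  simp only [Zcond_eq_lawSum, branchSum]

lemma card_LXYset_div (n : ℕ) (β : ℝ) :
    ((LXYset n p β).card : ℝ) / (2 ^ n : ℕ) =
      wordFreq n {l | branchSum p bhattTerm l ≤ deltaN n β} := by
  refine (wordFreq_pathIndex n fun m j => Zcond m p j ≤ deltaN n β).symm.trans ?_
  simp only [Zcond_eq_lawSum, branchSum]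

theorem tendsto_card_HXYset_div (hp : ∀ z, 0 ≤ p z) (hsum : ∑ z, p z = 1) {β : ℝ} (hβ0 : 0 < β)
    (hβ : β < 1 / 2) :
    Tendsto (fun n => ((HXYset n p β).card : ℝ) / (2 ^ n : ℕ)) atTop (nhds (entXY p)) := by
  have polar := isPolarPair_branchSum hp hsum
  simp only [card_HXYset_div, ← branchSum_entropyTerm_nil hp]
  exact (isEntropyOf_branchSum hp hsum).tendsto_wordFreq_one_sub_le_left polar
    (fun n => (deltaN_pos n β).le) (tendsto_deltaN hβ0) (polar.tendsto_wordFreq_undecided hβ0 hβ)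

theorem tendsto_card_LXYset_div (hp : ∀ z, 0 ≤ p z) (hsum : ∑ z, p z = 1) {β : ℝ} (hβ0 : 0 < β)
    (hβ : β < 1 / 2) :
    Tendsto (fun n => ((LXYset n p β).card : ℝ) / (2 ^ n : ℕ)) atTop (nhds (1 - entXY p)) := by
  simp only [card_LXYset_div, ← branchSum_entropyTerm_nil hp]
  exact (isEntropyOf_branchSum hp hsum).tendsto_wordFreq_left_le
    (fun n => (deltaN_pos n β).le) (tendsto_deltaN hβ0)
    ((isPolarPair_branchSum hp hsum).tendsto_wordFreq_undecided hβ0 hβ)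

end Conditional

section Unconditional

/-- The source with marginal `pm` and constant side information, which turns unconditional
quantities into conditional ones. -/
def withTrivialInfo (pm : ZMod 2 → ℝ) (z : ZMod 2 × Unit) : ℝ := pm z.1

lemma sum_withTrivialInfo (pm : ZMod 2 → ℝ) : ∑ z, withTrivialInfo pm z = ∑ x, pm x := by
  simp [withTrivialInfo, Fintype.sum_prod_type]

lemma Zcond_withTrivialInfo (n : ℕ) (pm : ZMod 2 → ℝ) (j : Fin (2 ^ n)) :
    Zcond n (withTrivialInfo pm) j = Zsrc n pm j := by
  simp only [Zcond, Zsrc, Fintype.sum_unique]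
  rfl

lemma HXYset_withTrivialInfo (n : ℕ) (pm : ZMod 2 → ℝ) (β : ℝ) :
    HXYset n (withTrivialInfo pm) β = HXset n pm β := by
  simp only [HXYset, HXset, Zcond_withTrivialInfo]

lemma LXYset_withTrivialInfo (n : ℕ) (pm : ZMod 2 → ℝ) (β : ℝ) :
    LXYset n (withTrivialInfo pm) β = LXset n pm β := by
  simp only [LXYset, LXset, Zcond_withTrivialInfo]

variable {Y : Type*} [Fintype Y] {p : ZMod 2 × Y → ℝ}

lemma sum_pmX (p : ZMod 2 × Y → ℝ) : ∑ x, pmX p x = ∑ z, p z :=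
  (Fintype.sum_prod_type p).symm

lemma entXY_withTrivialInfo_pmX (hsum : ∑ z, p z = 1) :
    entXY (withTrivialInfo (pmX p)) = entX p := by
  simp [entXY, entX, withTrivialInfo, sum_pmX, hsum]

end Unconditional

/-- polarization set sizes: with `β ∈ (0,1/2)` and `δ_N = 2^{-N^β}`,
`|ℋ_X|/N → H(X)`, `|ℒ_X|/N → 1 − H(X)`, `|ℋ_{X|Y}|/N → H(X|Y)` and
`|ℒ_{X|Y}|/N → 1 − H(X|Y)` as `N = 2^n → ∞`. -/
theorem polarization_set_sizes {Y : Type*} [Fintype Y] (p : ZMod 2 × Y → ℝ)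
    (hp : ∀ z, 0 ≤ p z) (hsum : ∑ z, p z = 1) (β : ℝ) (hβ : 0 < β ∧ β < 1 / 2) :
    Tendsto (fun n => ((HXset n (pmX p) β).card : ℝ) / (2 ^ n : ℕ)) atTop (nhds (entX p))
    ∧ Tendsto (fun n => ((LXset n (pmX p) β).card : ℝ) / (2 ^ n : ℕ)) atTop (nhds (1 - entX p))
    ∧ Tendsto (fun n => ((HXYset n p β).card : ℝ) / (2 ^ n : ℕ)) atTop (nhds (entXY p))
    ∧ Tendsto (fun n => ((LXYset n p β).card : ℝ) / (2 ^ n : ℕ)) atTop (nhds (1 - entXY p)) := by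
  obtain ⟨hβ0, hβ⟩ := hβ
  have marginal_nonneg (z : ZMod 2 × Unit) : 0 ≤ withTrivialInfo (pmX p) z :=
    sum_nonneg fun _ _ => hp _
  have marginal_sum : ∑ z, withTrivialInfo (pmX p) z = 1 := by
    rw [sum_withTrivialInfo, sum_pmX, hsum]
  refine ⟨?_, ?_, tendsto_card_HXYset_div hp hsum hβ0 hβ, tendsto_card_LXYset_div hp hsum hβ0 hβ⟩
  · simpa only [HXYset_withTrivialInfo, entXY_withTrivialInfo_pmX hsum] using
      tendsto_card_HXYset_div marginal_nonneg marginal_sum hβ0 hβ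
  · simpa only [LXYset_withTrivialInfo, entXY_withTrivialInfo_pmX hsum] using
      tendsto_card_LXYset_div marginal_nonneg marginal_sum hβ0 hβ

end PolarSrc
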